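/- Let λ ∈ (0, π), let L be an odd positive integer, and set θ_n = 2·arctan(sin(λ/2)·tan(nπ/L)) for n ∈ {0, …, L−1}. Then ∑_{n=0}^{L−1} θ_n = 0, and consequently the 2×2 matrix ∏_{n=0}^{L−1} R_z(−θ_n) maps the vector (1, 0)ᵀ to itself; in particular, when the eigenphase φ equals 0 the quantum phase discrimination circuit leaves the ancillary qubit exactly in the state |0⟩. -/

import Mathlib

/-!
The symmetry `n ↦ L - n` of the nonzero indices sends `tan (n π / L)` to its negative, and `arctan`
is odd, so the angles cancel in pairs, while `θ 0 = 0`.  The matrices `Rz` are diagonal, so their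
product acts on the first basis vector by the phase `exp (i (∑ θ n) / 2)`, which is then `1`.
-/

open Real Matrix

/-- The single-qubit rotation `R_z(θ) = diag(e^{−iθ/2}, e^{iθ/2})`. -/
noncomputable def Rz (θ : ℝ) : Matrix (Fin 2) (Fin 2) ℂ :=
  !![Complex.exp (-(θ / 2 : ℝ) * Complex.I), 0;
     0, Complex.exp ((θ / 2 : ℝ) * Complex.I)]

/-- The first basis vector is a common eigenvector of the rotations, and its eigenvalues multiply to
`exp (i (∑ θ n) / 2)`. -/
lemma Rz_prod_mulVec (θ : ℕ → ℝ) (N : ℕ) :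
    ((((List.range N).map fun n => Rz (-(θ n))).reverse).prod).mulVec ![1, 0] =
      ![Complex.exp (((∑ n ∈ Finset.range N, θ n) / 2 : ℝ) * Complex.I), 0] := by
  induction N with
  | zero => simp
  | succ k ih =>
    rw [List.range_succ, List.map_append, List.reverse_append, List.prod_append,
      ← Matrix.mulVec_mulVec, ih, Finset.sum_range_succ]
    ext i
    fin_cases i
    · simp [Rz, Matrix.mulVec, dotProduct, ← Complex.exp_add]
      ring_nf
    · simp [Rz, Matrix.mulVec, dotProduct]

/-- The angles at the indices `a` and `b = L - a` cancel. -/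
lemma theta_pair (s : ℝ) (L a b : ℕ) (hL : 0 < L) (hab : a + b = L) :
    2 * Real.arctan (s * Real.tan (a * π / L)) +
      2 * Real.arctan (s * Real.tan (b * π / L)) = 0 := by
  have hL' : (L : ℝ) ≠ 0 := by positivity
  have hb : (b : ℝ) * π / L = π - a * π / L := by
    have : (b : ℝ) = L - a := by rw [← hab]; push_cast; ring
    rw [this]
    field_simp
  rw [hb, Real.tan_pi_sub, mul_neg, Real.arctan_neg]
  ring

lemma sum_theta (s : ℝ) (L : ℕ) (hL : 0 < L) :
    ∑ n ∈ Finset.range L, 2 * Real.arctan (s * Real.tan (n * π / L)) = 0 := by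
  obtain ⟨m, rfl⟩ : ∃ m, L = m + 1 := ⟨L - 1, by omega⟩
  rw [Finset.sum_range_succ']
  set f : ℕ → ℝ := fun k =>
    2 * Real.arctan (s * Real.tan (((k + 1 : ℕ) : ℝ) * π / ((m + 1 : ℕ) : ℝ))) with hf
  have h2 : ∑ k ∈ Finset.range m, f k + ∑ k ∈ Finset.range m, f (m - 1 - k) = 0 := by
    rw [← Finset.sum_add_distrib]
    refine Finset.sum_eq_zero fun k hk => ?_
    have := Finset.mem_range.mp hk
    exact theta_pair s (m + 1) (k + 1) (m - 1 - k + 1) hL (by omega)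
  rw [Finset.sum_range_reflect] at h2
  have h0 : ∑ k ∈ Finset.range m, f k = 0 := by linarith
  simpa [hf] using h0

/-- Let λ ∈ (0, π), L an odd positive integer, and
θ_n = 2·arctan(sin(λ/2)·tan(nπ/L)) for n ∈ {0,…,L−1}.  Then ∑_{n=0}^{L−1} θ_n = 0,
and consequently ∏_{n=0}^{L−1} R_z(−θ_n) maps (1,0)ᵀ to itself: when the
eigenphase φ is 0 the QPD circuit leaves the ancillary qubit exactly in |0⟩. -/
theorem qpd_zero_phase (lam : ℝ) (hlam : lam ∈ Set.Ioo 0 π)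
    (L : ℕ) (hLpos : 0 < L) (hLodd : Odd L)
    (θ : ℕ → ℝ)
    (hθ : ∀ n < L, θ n = 2 * Real.arctan (Real.sin (lam / 2) * Real.tan (n * π / L))) :
    (∑ n ∈ Finset.range L, θ n) = 0 ∧
      ((((List.range L).map fun n => Rz (-(θ n))).reverse).prod).mulVec ![1, 0] = ![1, 0] := by
  have hsum : (∑ n ∈ Finset.range L, θ n) = 0 := by
    rw [Finset.sum_congr rfl fun n hn => hθ n (Finset.mem_range.mp hn)]
    exact sum_theta _ L hLpos
  refine ⟨hsum, ?_⟩
  rw [Rz_prod_mulVec, hsum]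
  simp
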